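/- For a smooth function ψ : ℝ³ → ℝ define ζ := ψ_xx + ψ_yy, σ := ψ_xxx − 3ψ_xyy, ς := 3ψ_xxy − ψ_yyy and W(ψ) := (σ² + ς²)/(ζ_x² + ζ_y²), wherever the denominator is nonzero. Then W is invariant under each of the following transformations, i.e., W(ψ̃) at (t,x,y) equals W(ψ) at the corresponding source point: (a) ψ̃(t,x,y) = e^{−ε}ψ(e^{−ε}t,x,y); (b) ψ̃(t,x,y) = e^{2ε}ψ(t,e^{−ε}x,e^{−ε}y); (c) ψ̃(t,x,y) = ψ(t, x cos(θ+εt) + y sin(θ+εt), −x sin(θ+εt) + y cos(θ+εt)) + (ε/2)(x²+y²) for any θ, ε ∈ ℝ; (d) ψ̃(t,x,y) = ψ(t, x−γ¹(t), y−γ²(t)) − γ¹'(t)y + γ²'(t)x for any smooth γ¹, γ²; (e) ψ̃(t,x,y) = ψ(t,x,y) + χ(t) for any smooth χ. -/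

import Mathlib

/-!
Statement 19: the differential function W(ψ) = (σ² + ς²)/(ζ_x² + ζ_y²), with
σ = ψ_xxx − 3ψ_xyy and ς = 3ψ_xxy − ψ_yyy, is a differential invariant of the
one-parameter symmetry groups generated by D₁, D₂, J + J^t, X(γ¹), Y(γ²) and Z(χ).
-/

noncomputable section

/-- Partial derivative with respect to t. -/
def dT (f : ℝ × ℝ × ℝ → ℝ) (p : ℝ × ℝ × ℝ) : ℝ := fderiv ℝ f p (1, 0, 0)
/-- Partial derivative with respect to x. -/
def dX (f : ℝ × ℝ × ℝ → ℝ) (p : ℝ × ℝ × ℝ) : ℝ := fderiv ℝ f p (0, 1, 0)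
/-- Partial derivative with respect to y. -/
def dY (f : ℝ × ℝ × ℝ → ℝ) (p : ℝ × ℝ × ℝ) : ℝ := fderiv ℝ f p (0, 0, 1)

/-- The vorticity ζ := ψ_xx + ψ_yy. -/
def vort (ψ : ℝ × ℝ × ℝ → ℝ) : ℝ × ℝ × ℝ → ℝ := fun p => dX (dX ψ) p + dY (dY ψ) p

/-- σ := ψ_xxx − 3 ψ_xyy. -/
def sig (ψ : ℝ × ℝ × ℝ → ℝ) (p : ℝ × ℝ × ℝ) : ℝ :=
  dX (dX (dX ψ)) p - 3 * dX (dY (dY ψ)) p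

/-- ς := 3 ψ_xxy − ψ_yyy. -/
def vsig (ψ : ℝ × ℝ × ℝ → ℝ) (p : ℝ × ℝ × ℝ) : ℝ :=
  3 * dY (dX (dX ψ)) p - dY (dY (dY ψ)) p

/-- The numerator σ² + ς². -/
def Wnum (ψ : ℝ × ℝ × ℝ → ℝ) (p : ℝ × ℝ × ℝ) : ℝ := (sig ψ p) ^ 2 + (vsig ψ p) ^ 2

/-- The denominator ζ_x² + ζ_y². -/
def Wden (ψ : ℝ × ℝ × ℝ → ℝ) (p : ℝ × ℝ × ℝ) : ℝ :=
  (dX (vort ψ) p) ^ 2 + (dY (vort ψ) p) ^ 2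

/-- W(ψ) = (σ² + ς²)/(ζ_x² + ζ_y²). -/
def W (ψ : ℝ × ℝ × ℝ → ℝ) (p : ℝ × ℝ × ℝ) : ℝ := Wnum ψ p / Wden ψ p

/-!
Put `z = x + iy`. For a real-valued `ψ` one has `8 ∂³ψ = σ - iς` and `2 ∂ζ = ζ_x - iζ_y`, where
`∂ = ∂/∂z` and `ζ = 4 ∂∂̄ψ`, so `W = |∂³ψ|² / |∂∂̄∂ψ|²`. At a fixed time each of the transformations
replaces `ψ` by `c ψ(αz + β)` plus a quadratic polynomial whose quadratic part is a multiple of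
`|z|²`. Both third-order operators annihilate the polynomial; as `∂` pulls out a factor `α` and
`∂̄` a factor `conj α`, they multiply the rest by `cα³` and `c|α|²α`, which have the same modulus.
-/

open Complex ComplexConjugate

section Wirtinger

variable {E : Type*} [NormedAddCommGroup E] [NormedSpace ℂ E] {f g : ℂ → E} {n : WithTop ℕ∞}

/-- Twice the Wirtinger derivative `∂/∂z`; the factor `2` avoids denominators. -/
def dz (f : ℂ → E) (z : ℂ) : E := fderiv ℝ f z 1 - I • fderiv ℝ f z I

/-- Twice the conjugate Wirtinger derivative `∂/∂z̄`. -/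
def dzBar (f : ℂ → E) (z : ℂ) : E := fderiv ℝ f z 1 + I • fderiv ℝ f z I

theorem contDiff_dz (hf : ContDiff ℝ (n + 1) f) : ContDiff ℝ n (dz f) := by
  have hf' : ContDiff ℝ n (fderiv ℝ f) := hf.fderiv_right le_rfl
  exact (hf'.clm_apply contDiff_const).sub ((hf'.clm_apply contDiff_const).const_smul I)

theorem contDiff_dzBar (hf : ContDiff ℝ (n + 1) f) : ContDiff ℝ n (dzBar f) := by
  have hf' : ContDiff ℝ n (fderiv ℝ f) := hf.fderiv_right le_rfl
  exact (hf'.clm_apply contDiff_const).add ((hf'.clm_apply contDiff_const).const_smul I)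

theorem dz_add (hf : Differentiable ℝ f) (hg : Differentiable ℝ g) :
    dz (f + g) = dz f + dz g := by
  ext z
  simp only [dz, fderiv_add (hf z) (hg z), add_apply, Pi.add_apply]
  module

theorem dzBar_add (hf : Differentiable ℝ f) (hg : Differentiable ℝ g) :
    dzBar (f + g) = dzBar f + dzBar g := by
  ext z
  simp only [dzBar, fderiv_add (hf z) (hg z), add_apply, Pi.add_apply]
  module

theorem clm_apply_eq_re_smul_add_im_smul (L : ℂ →L[ℝ] E) (z : ℂ) :
    L z = (z.re : ℂ) • L 1 + (z.im : ℂ) • L I := by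
  have hz : z = z.re • 1 + z.im • I := by simp
  conv_lhs => rw [hz, map_add, map_smul, map_smul]
  simp only [coe_smul]

theorem fderiv_smul_comp_mul_add (hf : Differentiable ℝ f) (c α β z v : ℂ) :
    fderiv ℝ (fun w => c • f (α * w + β)) z v = c • fderiv ℝ f (α * z + β) (α * v) := by
  have haffine : HasFDerivAt (fun w => α * w + β) (ContinuousLinearMap.mul ℝ ℂ α) z :=
    (ContinuousLinearMap.mul ℝ ℂ α).hasFDerivAt.add_const β
  have hcomp := ((hf (α * z + β)).hasFDerivAt.comp z haffine).const_smul c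
  exact DFunLike.congr_fun hcomp.fderiv v

theorem dz_smul_comp_mul_add (hf : Differentiable ℝ f) (c α β : ℂ) :
    dz (fun z => c • f (α * z + β)) = fun z => (c * α) • dz f (α * z + β) := by
  ext z
  simp only [dz, fderiv_smul_comp_mul_add hf, mul_one]
  generalize fderiv ℝ f (α * z + β) = L
  rw [clm_apply_eq_re_smul_add_im_smul L α, clm_apply_eq_re_smul_add_im_smul L (α * I),
    mul_I_re, mul_I_im, ofReal_neg]
  conv_rhs => rw [← re_add_im α]
  match_scalars
  · ring
  · linear_combination (c * α.im) * I_sq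

theorem dzBar_smul_comp_mul_add (hf : Differentiable ℝ f) (c α β : ℂ) :
    dzBar (fun z => c • f (α * z + β)) = fun z => (c * conj α) • dzBar f (α * z + β) := by
  ext z
  simp only [dzBar, fderiv_smul_comp_mul_add hf, mul_one]
  generalize fderiv ℝ f (α * z + β) = L
  rw [clm_apply_eq_re_smul_add_im_smul L α, clm_apply_eq_re_smul_add_im_smul L (α * I),
    mul_I_re, mul_I_im, ofReal_neg, ← re_add_im (conj α), conj_re, conj_im, ofReal_neg]
  match_scalars
  · ring
  · linear_combination (c * α.im) * I_sq

theorem dz_const_smul (hf : Differentiable ℝ f) (c : ℂ) : dz (c • f) = c • dz f := by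
  simpa using! dz_smul_comp_mul_add hf c 1 0

theorem dzBar_const_smul (hf : Differentiable ℝ f) (c : ℂ) : dzBar (c • f) = c • dzBar f := by
  simpa using! dzBar_smul_comp_mul_add hf c 1 0

theorem dz_const (a : E) : dz (fun _ => a) = 0 := by
  ext z
  simp [dz]

end Wirtinger

theorem fderiv_add_mul_conj (a b z v : ℂ) :
    fderiv ℝ (fun w => a + b * conj w) z v = b * conj v := by
  have hderiv : HasFDerivAt (fun w => a + b * conj w) (b • conjCLE.toContinuousLinearMap) z :=
    (conjCLE.hasFDerivAt.const_mul b).const_add a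
  exact DFunLike.congr_fun hderiv.fderiv v

theorem dz_add_mul_conj (a b : ℂ) : dz (fun z => a + b * conj z) = 0 := by
  ext z
  simp only [dz, fderiv_add_mul_conj, map_one, conj_I, smul_eq_mul, Pi.zero_apply]
  linear_combination b * I_sq

theorem dzBar_add_mul_conj (a b : ℂ) : dzBar (fun z => a + b * conj z) = fun _ => 2 * b := by
  ext z
  simp only [dzBar, fderiv_add_mul_conj, map_one, conj_I, smul_eq_mul]
  linear_combination -b * I_sq

/-- The quadratic polynomials in `x` and `y` (with `z = x + iy`) whose quadratic part is a multiple
of `x² + y²`; these are the terms that the symmetries add to `ψ` at a fixed time. -/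
def isotropicQuadratic (k l m n : ℝ) (z : ℂ) : ℂ :=
  ((k + l * z.re + m * z.im + n * (z.re ^ 2 + z.im ^ 2) : ℝ) : ℂ)

theorem contDiff_isotropicQuadratic (k l m n : ℝ) {r : WithTop ℕ∞} :
    ContDiff ℝ r (isotropicQuadratic k l m n) := by
  have hre : ContDiff ℝ r re := reCLM.contDiff
  have him : ContDiff ℝ r im := imCLM.contDiff
  have hreal : ContDiff ℝ r fun z : ℂ => k + l * z.re + m * z.im + n * (z.re ^ 2 + z.im ^ 2) := by
    fun_prop
  exact ofRealCLM.contDiff.comp hreal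

theorem fderiv_isotropicQuadratic (k l m n : ℝ) (z v : ℂ) :
    fderiv ℝ (isotropicQuadratic k l m n) z v =
      l * v.re + m * v.im + 2 * n * (z.re * v.re + z.im * v.im) := by
  have hre : HasFDerivAt re reCLM z := reCLM.hasFDerivAt
  have him : HasFDerivAt im imCLM z := imCLM.hasFDerivAt
  have hreal := (((hre.const_mul l).const_add k).add (him.const_mul m)).add
    (((hre.pow 2).add (him.pow 2)).const_mul n)
  refine (DFunLike.congr_fun (ofRealCLM.hasFDerivAt.comp z hreal).fderiv v).trans ?_
  simp only [Nat.add_one_sub_one, pow_one, nsmul_eq_mul, Nat.cast_ofNat,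
    ContinuousLinearMap.comp_apply, add_apply, smul_apply, reCLM_apply, imCLM_apply,
    ofRealCLM_apply, smul_eq_mul]
  push_cast
  ring

theorem dz_isotropicQuadratic (k l m n : ℝ) :
    dz (isotropicQuadratic k l m n) = fun z => (l - m * I) + 2 * n * conj z := by
  ext z
  rw [← re_add_im (conj z), conj_re, conj_im]
  simp only [dz, fderiv_isotropicQuadratic, one_re, one_im, I_re, I_im, ofReal_zero, ofReal_one,
    ofReal_neg, smul_eq_mul]
  ring

section TimeSlice

variable {F : ℝ × ℝ × ℝ → ℝ} {n : WithTop ℕ∞}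

theorem contDiff_dX (hF : ContDiff ℝ (n + 1) F) : ContDiff ℝ n (dX F) :=
  (hF.fderiv_right le_rfl).clm_apply contDiff_const

theorem contDiff_dY (hF : ContDiff ℝ (n + 1) F) : ContDiff ℝ n (dY F) :=
  (hF.fderiv_right le_rfl).clm_apply contDiff_const

theorem contDiff_vort (hF : ContDiff ℝ (n + 1 + 1) F) : ContDiff ℝ n (vort F) :=
  (contDiff_dX (contDiff_dX hF)).add (contDiff_dY (contDiff_dY hF))

theorem dX_dY_comm (hF : ContDiff ℝ 2 F) : dX (dY F) = dY (dX F) := by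
  ext p
  have hdiff : DifferentiableAt ℝ (fderiv ℝ F) p :=
    (hF.fderiv_right (m := 1) le_rfl).differentiable one_ne_zero p
  have hsymm : IsSymmSndFDerivAt ℝ F p := hF.contDiffAt.isSymmSndFDerivAt (by simp)
  have hsnd (v w : ℝ × ℝ × ℝ) :
      fderiv ℝ (fun q => fderiv ℝ F q v) p w = fderiv ℝ (fderiv ℝ F) p w v := by
    simp [fderiv_clm_apply hdiff (differentiableAt_const v)]
  calc dX (dY F) p = fderiv ℝ (fderiv ℝ F) p (0, 1, 0) (0, 0, 1) := hsnd _ _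
    _ = fderiv ℝ (fderiv ℝ F) p (0, 0, 1) (0, 1, 0) := hsymm.eq _ _
    _ = dY (dX F) p := (hsnd _ _).symm

/-- The function of `x + iy` obtained from `F (t, x, y)` by freezing the time `t`. -/
def timeSlice (F : ℝ × ℝ × ℝ → ℝ) (t : ℝ) (z : ℂ) : ℂ := F (t, z.re, z.im)

theorem contDiff_timeSlice (hF : ContDiff ℝ n F) (t : ℝ) : ContDiff ℝ n (timeSlice F t) :=
  ofRealCLM.contDiff.comp <| hF.comp <|
    contDiff_const.prodMk (reCLM.contDiff.prodMk imCLM.contDiff)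

theorem fderiv_timeSlice (hF : Differentiable ℝ F) (t : ℝ) (z v : ℂ) :
    fderiv ℝ (timeSlice F t) z v = fderiv ℝ F (t, z.re, z.im) (0, v.re, v.im) := by
  have hincl : HasFDerivAt (fun w : ℂ => (t, w.re, w.im))
      ((0 : ℂ →L[ℝ] ℝ).prod (reCLM.prod imCLM)) z :=
    (hasFDerivAt_const t z).prodMk (reCLM.hasFDerivAt.prodMk imCLM.hasFDerivAt)
  have hcomp := ofRealCLM.hasFDerivAt.comp z ((hF (t, z.re, z.im)).hasFDerivAt.comp z hincl)
  exact DFunLike.congr_fun hcomp.fderiv v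

theorem dz_timeSlice (hF : Differentiable ℝ F) (t : ℝ) :
    dz (timeSlice F t) = timeSlice (dX F) t + (-I) • timeSlice (dY F) t := by
  ext z
  simp [dz, fderiv_timeSlice hF, timeSlice, dX, dY, sub_eq_add_neg]

theorem dzBar_timeSlice (hF : Differentiable ℝ F) (t : ℝ) :
    dzBar (timeSlice F t) = timeSlice (dX F) t + I • timeSlice (dY F) t := by
  ext z
  simp [dzBar, fderiv_timeSlice hF, timeSlice, dX, dY]

theorem dz_dz_timeSlice (hF : ContDiff ℝ 2 F) (t : ℝ) :
    dz (dz (timeSlice F t)) = timeSlice (dX (dX F)) t + (-1 : ℂ) • timeSlice (dY (dY F)) t +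
      (-2 * I) • timeSlice (dX (dY F)) t := by
  have hX : ContDiff ℝ 1 (dX F) := contDiff_dX hF
  have hY : ContDiff ℝ 1 (dY F) := contDiff_dY hF
  have hXt := (contDiff_timeSlice hX t).differentiable one_ne_zero
  have hYt := (contDiff_timeSlice hY t).differentiable one_ne_zero
  rw [dz_timeSlice (hF.differentiable two_ne_zero), dz_add hXt (hYt.const_smul _),
    dz_const_smul hYt, dz_timeSlice (hX.differentiable one_ne_zero),
    dz_timeSlice (hY.differentiable one_ne_zero), dX_dY_comm hF]
  match_scalars <;> grind [I_mul_I]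

theorem dzBar_dz_timeSlice (hF : ContDiff ℝ 2 F) (t : ℝ) :
    dzBar (dz (timeSlice F t)) = timeSlice (vort F) t := by
  have hX : ContDiff ℝ 1 (dX F) := contDiff_dX hF
  have hY : ContDiff ℝ 1 (dY F) := contDiff_dY hF
  have hXt := (contDiff_timeSlice hX t).differentiable one_ne_zero
  have hYt := (contDiff_timeSlice hY t).differentiable one_ne_zero
  have hvort : timeSlice (vort F) t = timeSlice (dX (dX F)) t + timeSlice (dY (dY F)) t := by
    ext z
    simp [timeSlice, vort]
  rw [dz_timeSlice (hF.differentiable two_ne_zero), dzBar_add hXt (hYt.const_smul _),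
    dzBar_const_smul hYt, dzBar_timeSlice (hX.differentiable one_ne_zero),
    dzBar_timeSlice (hY.differentiable one_ne_zero), dX_dY_comm hF, hvort]
  match_scalars <;> norm_num [I_mul_I]

theorem dz_dz_dz_timeSlice (hF : ContDiff ℝ 3 F) (t : ℝ) :
    dz (dz (dz (timeSlice F t))) = timeSlice (sig F) t + (-I) • timeSlice (vsig F) t := by
  have hF2 : ContDiff ℝ 2 F := hF.of_le (by norm_num)
  have hX : ContDiff ℝ 2 (dX F) := contDiff_dX hF
  have hY : ContDiff ℝ 2 (dY F) := contDiff_dY hF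
  have hXX : ContDiff ℝ 1 (dX (dX F)) := contDiff_dX hX
  have hXY : ContDiff ℝ 1 (dX (dY F)) := contDiff_dX hY
  have hYY : ContDiff ℝ 1 (dY (dY F)) := contDiff_dY hY
  have hXXt := (contDiff_timeSlice hXX t).differentiable one_ne_zero
  have hXYt := (contDiff_timeSlice hXY t).differentiable one_ne_zero
  have hYYt := (contDiff_timeSlice hYY t).differentiable one_ne_zero
  have hXXY : dX (dX (dY F)) = dY (dX (dX F)) := by
    rw [dX_dY_comm hF2, dX_dY_comm hX]
  rw [dz_dz_timeSlice hF2, dz_add (hXXt.add (hYYt.const_smul _)) (hXYt.const_smul _),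
    dz_add hXXt (hYYt.const_smul _), dz_const_smul hYYt, dz_const_smul hXYt,
    dz_timeSlice (hXX.differentiable one_ne_zero), dz_timeSlice (hXY.differentiable one_ne_zero),
    dz_timeSlice (hYY.differentiable one_ne_zero), hXXY, ← dX_dY_comm hY]
  ext z
  simp only [Pi.add_apply, Pi.smul_apply, smul_eq_mul, timeSlice, sig, vsig, ofReal_sub,
    ofReal_mul, ofReal_ofNat]
  linear_combination (2 * dX (dY (dY F)) (t, z.re, z.im) : ℂ) * I_sq

end TimeSlice

/-- The invariant `W` in complex form. For a real-valued `f` the numerator is `|8 ∂³f|²`, where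
`8 ∂³ = (∂ₓ - i∂_y)³`, and the denominator is `|2 ∂(Δf)|²`. -/
def planarW (f : ℂ → ℂ) (z : ℂ) : ℝ :=
  normSq (dz (dz (dz f)) z) / normSq (dz (dzBar (dz f)) z)

theorem normSq_timeSlice_add_neg_I_smul (F G : ℝ × ℝ × ℝ → ℝ) (t : ℝ) (z : ℂ) :
    normSq ((timeSlice F t + (-I) • timeSlice G t) z) =
      F (t, z.re, z.im) ^ 2 + G (t, z.re, z.im) ^ 2 := by
  simp [timeSlice, normSq_apply, sq]

theorem W_eq_planarW {F : ℝ × ℝ × ℝ → ℝ} (hF : ContDiff ℝ 3 F) (t : ℝ) (z : ℂ) :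
    W F (t, z.re, z.im) = planarW (timeSlice F t) z := by
  have hF2 : ContDiff ℝ 2 F := hF.of_le (by norm_num)
  have hvort : ContDiff ℝ 1 (vort F) := contDiff_vort hF
  rw [planarW, dz_dz_dz_timeSlice hF, dzBar_dz_timeSlice hF2,
    dz_timeSlice (hvort.differentiable one_ne_zero), normSq_timeSlice_add_neg_I_smul,
    normSq_timeSlice_add_neg_I_smul]
  rfl

theorem planarW_add {f g : ℂ → ℂ} (hf : ContDiff ℝ 3 f) (hg : ContDiff ℝ 3 g)
    (hg_ddd : dz (dz (dz g)) = 0) (hg_dbd : dz (dzBar (dz g)) = 0) :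
    planarW (f + g) = planarW f := by
  have hdf : ContDiff ℝ 2 (dz f) := contDiff_dz hf
  have hdg : ContDiff ℝ 2 (dz g) := contDiff_dz hg
  have hddf : ContDiff ℝ 1 (dz (dz f)) := contDiff_dz hdf
  have hddg : ContDiff ℝ 1 (dz (dz g)) := contDiff_dz hdg
  have hbdf : ContDiff ℝ 1 (dzBar (dz f)) := contDiff_dzBar hdf
  have hbdg : ContDiff ℝ 1 (dzBar (dz g)) := contDiff_dzBar hdg
  ext z
  rw [planarW, dz_add (hf.differentiable three_ne_zero) (hg.differentiable three_ne_zero),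
    dz_add (hdf.differentiable two_ne_zero) (hdg.differentiable two_ne_zero),
    dz_add (hddf.differentiable one_ne_zero) (hddg.differentiable one_ne_zero),
    dzBar_add (hdf.differentiable two_ne_zero) (hdg.differentiable two_ne_zero),
    dz_add (hbdf.differentiable one_ne_zero) (hbdg.differentiable one_ne_zero),
    hg_ddd, hg_dbd, add_zero, add_zero, planarW]

theorem planarW_add_isotropicQuadratic {f : ℂ → ℂ} (hf : ContDiff ℝ 3 f) (k l m n : ℝ) :
    planarW (f + isotropicQuadratic k l m n) = planarW f := by
  apply planarW_add hf (contDiff_isotropicQuadratic k l m n)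
  · rw [dz_isotropicQuadratic, dz_add_mul_conj]
    exact dz_const 0
  · rw [dz_isotropicQuadratic, dzBar_add_mul_conj, dz_const]

theorem planarW_smul_comp_mul_add {f : ℂ → ℂ} (hf : ContDiff ℝ 3 f) {c α : ℂ} (hc : c ≠ 0)
    (hα : α ≠ 0) (β z : ℂ) :
    planarW (fun w => c • f (α * w + β)) z = planarW f (α * z + β) := by
  have hdf : ContDiff ℝ 2 (dz f) := contDiff_dz hf
  have hddf : ContDiff ℝ 1 (dz (dz f)) := contDiff_dz hdf
  have hbdf : ContDiff ℝ 1 (dzBar (dz f)) := contDiff_dzBar hdf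
  have hfactor : normSq (c * α * α * α) ≠ 0 := by
    simp [hc, hα]
  have hfactor_conj : normSq (c * α * conj α * α) = normSq (c * α * α * α) := by
    simp only [map_mul, normSq_conj]
  rw [planarW, dz_smul_comp_mul_add (hf.differentiable three_ne_zero),
    dz_smul_comp_mul_add (hdf.differentiable two_ne_zero),
    dz_smul_comp_mul_add (hddf.differentiable one_ne_zero),
    dzBar_smul_comp_mul_add (hdf.differentiable two_ne_zero),
    dz_smul_comp_mul_add (hbdf.differentiable one_ne_zero)]
  simp only [smul_eq_mul]
  rw [normSq_mul, normSq_mul (c * α * conj α * α), hfactor_conj, mul_div_mul_left _ _ hfactor,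
    planarW]

theorem W_eq_of_planar_similarity {F ψ : ℝ × ℝ × ℝ → ℝ} (hF : ContDiff ℝ 3 F)
    (hψ : ContDiff ℝ 3 ψ) (c A B a b k l m n : ℝ) {s t x y x' y' : ℝ}
    (hFψ : ∀ x y, F (t, x, y) = c * ψ (s, A * x + B * y + a, -B * x + A * y + b) +
      (k + l * x + m * y + n * (x ^ 2 + y ^ 2)))
    (hx' : x' = A * x + B * y + a) (hy' : y' = -B * x + A * y + b)
    (hc : c ≠ 0) (hAB : A ^ 2 + B ^ 2 ≠ 0) :
    W F (t, x, y) = W ψ (s, x', y') := by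
  let α : ℂ := ⟨A, -B⟩
  let β : ℂ := ⟨a, b⟩
  have hα : α ≠ 0 := by
    refine normSq_eq_zero.not.mp ?_
    simpa [α, normSq_mk, ← sq] using hAB
  have hmap (z : ℂ) : α * z + β = ⟨A * z.re + B * z.im + a, -B * z.re + A * z.im + b⟩ := by
    apply Complex.ext
    · simp [α, β]
    · simp only [add_im, mul_im, α, β]
      ring
  have hslice : timeSlice F t =
      (fun z => (c : ℂ) • timeSlice ψ s (α * z + β)) + isotropicQuadratic k l m n := by
    ext z
    simp [timeSlice, isotropicQuadratic, hFψ, hmap]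
  have hψs : ContDiff ℝ 3 (timeSlice ψ s) := contDiff_timeSlice hψ s
  have hcomp : ContDiff ℝ 3 fun z => (c : ℂ) • timeSlice ψ s (α * z + β) := by fun_prop
  calc W F (t, x, y) = planarW (timeSlice F t) ⟨x, y⟩ := W_eq_planarW hF t ⟨x, y⟩
    _ = planarW (timeSlice ψ s) (α * ⟨x, y⟩ + β) := by
      rw [hslice, planarW_add_isotropicQuadratic hcomp,
        planarW_smul_comp_mul_add hψs (ofReal_ne_zero.mpr hc) hα]
    _ = W ψ (s, x', y') := by
      rw [← W_eq_planarW hψ, hmap, hx', hy']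

theorem W3_is_differential_invariant
    (ψ : ℝ × ℝ × ℝ → ℝ) (hψ : ContDiff ℝ (⊤ : ℕ∞) ψ) :
    -- (a) ψ̃(t,x,y) = e^{−ε} ψ(e^{−ε}t, x, y)
    (∀ ε : ℝ, ∀ p : ℝ × ℝ × ℝ,
      Wden ψ (Real.exp (-ε) * p.1, p.2.1, p.2.2) ≠ 0 →
      W (fun q => Real.exp (-ε) * ψ (Real.exp (-ε) * q.1, q.2.1, q.2.2)) p
        = W ψ (Real.exp (-ε) * p.1, p.2.1, p.2.2)) ∧
    -- (b) ψ̃(t,x,y) = e^{2ε} ψ(t, e^{−ε}x, e^{−ε}y)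
    (∀ ε : ℝ, ∀ p : ℝ × ℝ × ℝ,
      Wden ψ (p.1, Real.exp (-ε) * p.2.1, Real.exp (-ε) * p.2.2) ≠ 0 →
      W (fun q => Real.exp (2 * ε) * ψ (q.1, Real.exp (-ε) * q.2.1, Real.exp (-ε) * q.2.2)) p
        = W ψ (p.1, Real.exp (-ε) * p.2.1, Real.exp (-ε) * p.2.2)) ∧
    -- (c) rotation through angle θ + εt together with the ε/2 (x²+y²) shift
    (∀ θ ε : ℝ, ∀ p : ℝ × ℝ × ℝ,
      Wden ψ (p.1, p.2.1 * Real.cos (θ + ε * p.1) + p.2.2 * Real.sin (θ + ε * p.1),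
              -p.2.1 * Real.sin (θ + ε * p.1) + p.2.2 * Real.cos (θ + ε * p.1)) ≠ 0 →
      W (fun q => ψ (q.1, q.2.1 * Real.cos (θ + ε * q.1) + q.2.2 * Real.sin (θ + ε * q.1),
                     -q.2.1 * Real.sin (θ + ε * q.1) + q.2.2 * Real.cos (θ + ε * q.1))
          + ε / 2 * (q.2.1 ^ 2 + q.2.2 ^ 2)) p
        = W ψ (p.1, p.2.1 * Real.cos (θ + ε * p.1) + p.2.2 * Real.sin (θ + ε * p.1),
               -p.2.1 * Real.sin (θ + ε * p.1) + p.2.2 * Real.cos (θ + ε * p.1))) ∧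
    -- (d) generalized Galilean transformations
    (∀ γ1 γ2 : ℝ → ℝ, ContDiff ℝ (⊤ : ℕ∞) γ1 → ContDiff ℝ (⊤ : ℕ∞) γ2 → ∀ p : ℝ × ℝ × ℝ,
      Wden ψ (p.1, p.2.1 - γ1 p.1, p.2.2 - γ2 p.1) ≠ 0 →
      W (fun q => ψ (q.1, q.2.1 - γ1 q.1, q.2.2 - γ2 q.1)
          - deriv γ1 q.1 * q.2.2 + deriv γ2 q.1 * q.2.1) p
        = W ψ (p.1, p.2.1 - γ1 p.1, p.2.2 - γ2 p.1)) ∧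
    -- (e) shifts of ψ by functions of time
    (∀ χ : ℝ → ℝ, ContDiff ℝ (⊤ : ℕ∞) χ → ∀ p : ℝ × ℝ × ℝ,
      Wden ψ p ≠ 0 →
      W (fun q => ψ q + χ q.1) p = W ψ p) := by
  have contDiff_three {f : ℝ × ℝ × ℝ → ℝ} (hf : ContDiff ℝ (⊤ : ℕ∞) f) : ContDiff ℝ 3 f :=
    hf.of_le ENat.LEInfty.out
  have hψ₃ : ContDiff ℝ 3 ψ := contDiff_three hψ
  refine ⟨fun ε ⟨t, x, y⟩ _ => ?_, fun ε ⟨t, x, y⟩ _ => ?_, fun θ ε ⟨t, x, y⟩ _ => ?_,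
    fun γ1 γ2 hγ1 hγ2 ⟨t, x, y⟩ _ => ?_, fun χ hχ ⟨t, x, y⟩ _ => ?_⟩
  · exact W_eq_of_planar_similarity (contDiff_three (by fun_prop)) hψ₃ (Real.exp (-ε)) 1 0 0 0
      0 0 0 0 (by simp) (by simp) (by simp) (Real.exp_ne_zero _) (by simp)
  · exact W_eq_of_planar_similarity (contDiff_three (by fun_prop)) hψ₃ (Real.exp (2 * ε))
      (Real.exp (-ε)) 0 0 0 0 0 0 0 (by simp) (by simp) (by simp) (Real.exp_ne_zero _) (by simp)
  · exact W_eq_of_planar_similarity (contDiff_three (by fun_prop)) hψ₃ 1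
      (Real.cos (θ + ε * t)) (Real.sin (θ + ε * t)) 0 0 0 0 0 (ε / 2)
      (by simp [mul_comm]) (by simp [mul_comm]) (by simp [mul_comm]) one_ne_zero (by simp)
  · have : ContDiff ℝ (⊤ : ℕ∞) (deriv γ1) := (contDiff_infty_iff_deriv.mp hγ1).2
    have : ContDiff ℝ (⊤ : ℕ∞) (deriv γ2) := (contDiff_infty_iff_deriv.mp hγ2).2
    exact W_eq_of_planar_similarity (contDiff_three (by fun_prop)) hψ₃ 1 1 0 (-γ1 t) (-γ2 t)
      0 (deriv γ2 t) (-deriv γ1 t) 0 (fun x y => by ring_nf)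
      (by ring) (by ring) one_ne_zero (by simp)
  · exact W_eq_of_planar_similarity (contDiff_three (by fun_prop)) hψ₃ 1 1 0 0 0 (χ t) 0 0 0
      (by simp) (by simp) (by simp) one_ne_zero (by simp)
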